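/- For any poset P, the poset 𝐝(Σ P) of closed d-sets of Σ P, ordered by inclusion, is a dcpo; the map η : P → 𝐝(Σ P), η(x) = ↓x, is Scott continuous; and for every Scott continuous map f : P → Q into a dcpo Q there is a unique Scott continuous map f̃ : 𝐝(Σ P) → Q with f̃ ∘ η = f. Thus ⟨𝐝(Σ P), η⟩ is a D_s-completion (dcpo-completion) of P. -/

import Mathlib

universe u v

open Set

/-- The specialization order on a topological space: `specLE x y` iff `x ∈ closure {y}`. -/
def specLE {X : Type*} [TopologicalSpace X] (x y : X) : Prop :=
  x ∈ closure ({y} : Set X)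

/-- `a` is an upper bound of `D` with respect to the specialization order. -/
def specUB {X : Type*} [TopologicalSpace X] (D : Set X) (a : X) : Prop :=
  ∀ d ∈ D, specLE d a

/-- `a` is a least upper bound of `D` with respect to the specialization order. -/
def specLUB {X : Type*} [TopologicalSpace X] (D : Set X) (a : X) : Prop :=
  specUB D a ∧ ∀ b, specUB D b → specLE a b

/-- `U` is Scott open with respect to the specialization order. -/
def ScottOpenSpec {X : Type*} [TopologicalSpace X] (U : Set X) : Prop :=
  (∀ x y, specLE x y → x ∈ U → y ∈ U) ∧
  ∀ D : Set X, D.Nonempty → DirectedOn specLE D → ∀ a, specLUB D a → a ∈ U →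
    (D ∩ U).Nonempty

/-- A d-space (monotone convergence space): a T0 space which is a dcpo in its
specialization order and in which every open set is Scott open with respect to
the specialization order. -/
def DSpace (X : Type*) [TopologicalSpace X] : Prop :=
  T0Space X ∧
  (∀ D : Set X, D.Nonempty → DirectedOn specLE D → ∃ a, specLUB D a) ∧
  (∀ U : Set X, IsOpen U → ScottOpenSpec U)

/-- A set is saturated if it is an intersection of open sets. -/
def Saturated {X : Type*} [TopologicalSpace X] (A : Set X) : Prop :=
  ∃ 𝒰 : Set (Set X), (∀ U ∈ 𝒰, IsOpen U) ∧ A = ⋂₀ 𝒰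

/-- A T0 space is well-filtered if every filtered (under reverse inclusion) family of
nonempty compact saturated sets whose intersection is contained in an open set `U`
has a member contained in `U`. -/
def WellFiltered (X : Type*) [TopologicalSpace X] : Prop :=
  T0Space X ∧
  ∀ 𝒦 : Set (Set X), 𝒦.Nonempty →
    (∀ K ∈ 𝒦, K.Nonempty ∧ IsCompact K ∧ Saturated K) →
    DirectedOn (fun A B => B ⊆ A) 𝒦 →
    ∀ U : Set X, IsOpen U → ⋂₀ 𝒦 ⊆ U → ∃ K ∈ 𝒦, K ⊆ U

/-- A nonempty closed set which is irreducible. -/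
def IrredClosed {X : Type*} [TopologicalSpace X] (A : Set X) : Prop :=
  A.Nonempty ∧ IsClosed A ∧
  ∀ F₁ F₂ : Set X, IsClosed F₁ → IsClosed F₂ → A ⊆ F₁ ∪ F₂ → (A ⊆ F₁ ∨ A ⊆ F₂)

/-- A space is sober if every irreducible closed set is the closure of a unique point. -/
def Sober (X : Type*) [TopologicalSpace X] : Prop :=
  ∀ A : Set X, IrredClosed A → ∃! x : X, A = closure ({x} : Set X)

/-- The specialization preorder on a topological space. -/
def specPreorder (Y : Type*) [TopologicalSpace Y] : Preorder Y where
  le := specLE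
  le_refl x := subset_closure rfl
  le_trans x y z hxy hyz :=
    closure_minimal (Set.singleton_subset_iff.mpr hyz) isClosed_closure hxy

/-- A Scott open subset of a poset: an upper set inaccessible by suprema of directed sets. -/
def IsScottOpen {P : Type*} [Preorder P] (U : Set P) : Prop :=
  IsUpperSet U ∧
  ∀ D : Set P, D.Nonempty → DirectedOn (· ≤ ·) D → ∀ a, IsLUB D a → a ∈ U →
    (D ∩ U).Nonempty

/-- The Scott topology on a poset. `Σ P` is `P` equipped with `scottTop P`. -/
def scottTop (P : Type*) [Preorder P] : TopologicalSpace P where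
  IsOpen := IsScottOpen
  isOpen_univ := by
    refine ⟨isUpperSet_univ, fun D hD _ _ _ _ => ?_⟩
    obtain ⟨d, hd⟩ := hD
    exact ⟨d, hd, trivial⟩
  isOpen_inter := by
    rintro U V ⟨hU1, hU2⟩ ⟨hV1, hV2⟩
    refine ⟨hU1.inter hV1, ?_⟩
    rintro D hne hdir a ha ⟨haU, haV⟩
    obtain ⟨d1, hd1D, hd1U⟩ := hU2 D hne hdir a ha haU
    obtain ⟨d2, hd2D, hd2V⟩ := hV2 D hne hdir a ha haV
    obtain ⟨d3, hd3D, h13, h23⟩ := hdir d1 hd1D d2 hd2D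
    exact ⟨d3, hd3D, hU1 h13 hd1U, hV1 h23 hd2V⟩
  isOpen_sUnion := by
    intro S hS
    refine ⟨isUpperSet_sUnion fun s hs => (hS s hs).1, ?_⟩
    rintro D hne hdir a ha ⟨U, hUS, haU⟩
    obtain ⟨d, hdD, hdU⟩ := (hS U hUS).2 D hne hdir a ha haU
    exact ⟨d, hdD, U, hUS, hdU⟩

/-- A dcpo: every nonempty directed subset has a least upper bound. -/
def IsDcpo (P : Type*) [Preorder P] : Prop :=
  ∀ D : Set P, D.Nonempty → DirectedOn (· ≤ ·) D → ∃ a, IsLUB D a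

/-- The way-below relation. -/
def wayBelow {P : Type*} [Preorder P] (x y : P) : Prop :=
  ∀ D : Set P, D.Nonempty → DirectedOn (· ≤ ·) D → ∀ a, IsLUB D a → y ≤ a →
    ∃ d ∈ D, x ≤ d

/-- A poset is Noetherian if every (nonempty) directed subset has a greatest member. -/
def Noetherian (P : Type*) [Preorder P] : Prop :=
  ∀ D : Set P, D.Nonempty → DirectedOn (· ≤ ·) D → ∃ m ∈ D, ∀ d ∈ D, d ≤ m

/-- An ideal: a (nonempty) directed lower set. -/
def IsIdealSet {P : Type*} [Preorder P] (I : Set P) : Prop :=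
  I.Nonempty ∧ DirectedOn (· ≤ ·) I ∧ IsLowerSet I

/-- The Alexandroff topology on a poset: the open sets are the upper sets. -/
def alexTop (P : Type*) [Preorder P] : TopologicalSpace P where
  IsOpen := IsUpperSet
  isOpen_univ := isUpperSet_univ
  isOpen_inter _ _ := IsUpperSet.inter
  isOpen_sUnion _ h := isUpperSet_sUnion h

/-- The space `X_⊤` obtained from `X` by adjoining a new top point `⊤` (here `none`):
the closed sets are the closed sets of `X` together with the whole space. -/
def topTop (X : Type*) [TopologicalSpace X] : TopologicalSpace (Option X) where
  IsOpen V := V = ∅ ∨ ∃ U : Set X, IsOpen U ∧ V = insert none (some '' U)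
  isOpen_univ := by
    refine Or.inr ⟨Set.univ, isOpen_univ, ?_⟩
    ext (_ | a) <;> simp
  isOpen_inter := by
    rintro V W (rfl | ⟨U₁, hU₁, rfl⟩) hW
    · exact Or.inl (by simp)
    rcases hW with rfl | ⟨U₂, hU₂, rfl⟩
    · exact Or.inl (by simp)
    · refine Or.inr ⟨U₁ ∩ U₂, hU₁.inter hU₂, ?_⟩
      ext (_ | a) <;> simp
  isOpen_sUnion := by
    classical
    intro S hS
    by_cases h0 : ⋃₀ S = ∅
    · exact Or.inl h0
    · refine Or.inr ⟨{x : X | some x ∈ ⋃₀ S}, ?_, ?_⟩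
      · have h1 : {x : X | some x ∈ ⋃₀ S} = ⋃ V ∈ S, some ⁻¹' V := by
          ext x; simp [Set.mem_sUnion]
        rw [h1]
        refine isOpen_biUnion fun V hV => ?_
        rcases hS V hV with rfl | ⟨U, hU, rfl⟩
        · rw [Set.preimage_empty]; exact isOpen_empty
        · have h2 : (some ⁻¹' (insert none (some '' U)) : Set X) = U := by
            ext x; simp
          rw [h2]; exact hU
      · have hnone : (none : Option X) ∈ ⋃₀ S := by
          obtain ⟨v, V, hVS, hvV⟩ := Set.nonempty_iff_ne_empty.mpr h0
          rcases hS V hVS with rfl | ⟨U, hU, rfl⟩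
          · exact absurd hvV (by simp)
          · exact ⟨_, hVS, by simp⟩
        ext (_ | a)
        · simp only [Set.mem_insert_iff, true_or, iff_true]
          exact hnone
        · simp [Set.mem_sUnion]

/-- A `𝐊`-set of a space `X` (relative to a class `K` of spaces): a set whose image
under any continuous map to a `𝐊`-space has the closure of a unique point as closure. -/
def IsKSet (K : (Y : Type u) → TopologicalSpace Y → Prop)
    (X : Type u) [tX : TopologicalSpace X] (A : Set X) : Prop :=
  ∀ (Y : Type u) (tY : TopologicalSpace Y), K Y tY →
    ∀ f : X → Y, @Continuous X Y tX tY f →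
      ∃! y : Y, @closure Y tY (f '' A) = @closure Y tY {y}

/-- `𝐊(X)`: the collection of closed `𝐊`-sets of `X`. -/
def KSets (K : (Y : Type u) → TopologicalSpace Y → Prop)
    (X : Type u) [TopologicalSpace X] : Set (Set X) :=
  {A : Set X | IsClosed A ∧ IsKSet K X A}

/-- The lower Vietoris topology on a family `G` of subsets of `X`, generated by the
sets `◊U = {A ∈ G | A ∩ U ≠ ∅}` for `U` open. -/
def lowerVietoris {X : Type*} [TopologicalSpace X] (G : Set (Set X)) :
    TopologicalSpace ↥G :=
  TopologicalSpace.generateFrom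
    {S : Set ↥G | ∃ U : Set X, IsOpen U ∧ S = {A : ↥G | ((A : Set X) ∩ U).Nonempty}}

/-- A class `K` of spaces is adequate if `P_H(𝐊(X))` is a `𝐊`-space for every T0 space `X`. -/
def Adequate (K : (Y : Type u) → TopologicalSpace Y → Prop) : Prop :=
  ∀ (X : Type u) (tX : TopologicalSpace X), @T0Space X tX →
    K ↥(@KSets K X tX) (@lowerVietoris X tX (@KSets K X tX))

/-- `⟨Z, η⟩` is a `𝐊`-reflection of `X`. -/
def IsKReflection (K : (Y : Type u) → TopologicalSpace Y → Prop)
    (X : Type u) (tX : TopologicalSpace X)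
    (Z : Type u) (tZ : TopologicalSpace Z) (η : X → Z) : Prop :=
  K Z tZ ∧ @Continuous X Z tX tZ η ∧
  ∀ (Y : Type u) (tY : TopologicalSpace Y), K Y tY →
    ∀ f : X → Y, @Continuous X Y tX tY f →
      ∃! g : Z → Y, @Continuous Z Y tZ tY g ∧ g ∘ η = f

/-- The carrier of the Johnstone poset `𝕁 = ℕ × (ℕ ∪ {ω})`. -/
structure Johnstone where
  fst : ℕ
  snd : WithTop ℕ

/-- The Johnstone order: `(j, k) ≤ (m, n)` iff `j = m` and `k ≤ n`, or `n = ω` and `k ≤ m`. -/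
instance : PartialOrder Johnstone where
  le p q := (p.fst = q.fst ∧ p.snd ≤ q.snd) ∨ (q.snd = ⊤ ∧ p.snd ≤ (q.fst : WithTop ℕ))
  le_refl p := Or.inl ⟨rfl, le_rfl⟩
  le_trans p q r hpq hqr := by
    rcases hpq with ⟨h1, h2⟩ | ⟨h1, h2⟩ <;> rcases hqr with ⟨h3, h4⟩ | ⟨h3, h4⟩
    · exact Or.inl ⟨h1.trans h3, h2.trans h4⟩
    · exact Or.inr ⟨h3, h2.trans h4⟩
    · have hr : r.snd = ⊤ := top_le_iff.mp (h1 ▸ h4)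
      exact Or.inr ⟨hr, h3 ▸ h2⟩
    · rw [h1] at h4
      exact absurd h4 (by simp)
  le_antisymm p q hpq hqp := by
    obtain ⟨pf, ps⟩ := p
    obtain ⟨qf, qs⟩ := q
    rcases hpq with ⟨h1, h2⟩ | ⟨h1, h2⟩ <;> rcases hqp with ⟨h3, h4⟩ | ⟨h3, h4⟩
    · dsimp at *
      cases h1
      cases le_antisymm h2 h4
      rfl
    · dsimp at *
      rw [h3] at h2
      rw [top_le_iff.mp h2] at h4
      exact absurd h4 (by simp)
    · dsimp at *
      rw [h1] at h4
      rw [top_le_iff.mp h4] at h2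
      exact absurd h2 (by simp)
    · dsimp at *
      rw [h3] at h2
      exact absurd h2 (by simp)

/-- The class of d-spaces. -/
def dClass : (Y : Type u) → TopologicalSpace Y → Prop := fun Y tY => @DSpace Y tY

/-- The class of well-filtered spaces. -/
def wfClass : (Y : Type u) → TopologicalSpace Y → Prop := fun Y tY => @WellFiltered Y tY

/-- The class of sober spaces. -/
def soberClass : (Y : Type u) → TopologicalSpace Y → Prop := fun Y tY => @Sober Y tY

theorem aux_isClosed_iff {P : Type*} [Preorder P] (A : Set P) :
    @IsClosed P (scottTop P) A ↔ IsLowerSet A ∧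
      ∀ D : Set P, D.Nonempty → DirectedOn (· ≤ ·) D → ∀ a, IsLUB D a → D ⊆ A → a ∈ A := by
  letI := scottTop P
  rw [← isOpen_compl_iff]
  constructor
  · rintro ⟨h1, h2⟩
    refine ⟨isUpperSet_compl.mp h1, fun D hne hd a ha hDA => ?_⟩
    by_contra hc
    obtain ⟨d, hd, hd'⟩ := h2 D hne hd a ha hc
    exact hd' (hDA hd)
  · rintro ⟨h1, h2⟩
    refine ⟨isUpperSet_compl.mpr h1, fun D hne hd a ha haA => ?_⟩
    by_contra hc
    refine haA (h2 D hne hd a ha fun d hdD => ?_)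
    by_contra hdA
    exact hc ⟨d, hdD, hdA⟩

theorem aux_isClosed_Iic {P : Type*} [Preorder P] (x : P) :
    @IsClosed P (scottTop P) {p | p ≤ x} := by
  rw [aux_isClosed_iff]
  exact ⟨fun a b hba ha => le_trans hba ha, fun D _ _ a ha hD => ha.2 fun d hd => hD hd⟩

theorem aux_closure {P : Type*} [Preorder P] (x : P) :
    @closure P (scottTop P) {x} = {p | p ≤ x} := by
  letI := scottTop P
  apply Set.Subset.antisymm
  · exact closure_minimal (by simp) (aux_isClosed_Iic x)
  · intro p hp
    exact ((aux_isClosed_iff _).1 (isClosed_closure (s := ({x} : Set P)))).1 hp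
      (subset_closure rfl)

theorem aux_specLE {P : Type*} [Preorder P] (x y : P) :
    @specLE P (scottTop P) x y ↔ x ≤ y := by
  unfold specLE
  rw [aux_closure]; rfl

theorem aux_dSpace (Q : Type*) [PartialOrder Q] (hQ : IsDcpo Q) : @DSpace Q (scottTop Q) := by
  letI := scottTop Q
  have e : (specLE : Q → Q → Prop) = (· ≤ ·) := by
    funext x y; exact propext (aux_specLE x y)
  have e2 : ∀ (D : Set Q) a, specLUB D a ↔ IsLUB D a := by
    intro D a
    unfold specLUB specUB
    rw [e]; rfl
  refine ⟨⟨fun x y h => ?_⟩, ?_, ?_⟩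
  · apply le_antisymm
    · rw [← aux_specLE]; exact h.symm.specializes.mem_closure
    · rw [← aux_specLE]; exact h.specializes.mem_closure
  · intro D hne hd
    rw [e] at hd
    obtain ⟨a, ha⟩ := hQ D hne hd
    exact ⟨a, (e2 D a).2 ha⟩
  · intro U hU
    refine ⟨fun x y h hx => hU.1 ((aux_specLE x y).1 h) hx, fun D hne hd a ha => ?_⟩
    rw [e] at hd
    exact hU.2 D hne hd a ((e2 D a).1 ha)

theorem aux_cont {P Q : Type*} [PartialOrder P] [PartialOrder Q] {f : P → Q}
    (hf : ScottContinuous f) : @Continuous P Q (scottTop P) (scottTop Q) f := by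
  letI := scottTop P
  letI := scottTop Q
  refine ⟨fun U hU => ⟨fun a b hab ha => hU.1 (hf.monotone hab) ha, fun D hne hd a ha haU => ?_⟩⟩
  obtain ⟨_, ⟨d, hdD, rfl⟩, hdU⟩ := hU.2 (f '' D) (hne.image f)
    (by
      rintro _ ⟨x, hx, rfl⟩ _ ⟨y, hy, rfl⟩
      obtain ⟨z, hz, hxz, hyz⟩ := hd x hx y hy
      exact ⟨f z, ⟨z, hz, rfl⟩, hf.monotone hxz, hf.monotone hyz⟩) (f a) (hf hne hd ha) haU
  exact ⟨d, hdD, hdU⟩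

/-- The closure of a directed union of closed d-sets is a closed d-set. -/
theorem aux_union (X : Type u) [tX : TopologicalSpace X] (D : Set ↥(KSets dClass X))
    (hne : D.Nonempty) (hd : DirectedOn (· ≤ ·) D) :
    closure (⋃ A ∈ D, (A : Set X)) ∈ KSets dClass X := by
  refine ⟨isClosed_closure, fun Y tY hY f hf => ?_⟩
  have hY' : DSpace Y := hY
  obtain ⟨hT, hsup, hopen⟩ := hY'
  have huniq : ∀ y z : Y, closure ({y} : Set Y) = closure {z} → y = z := fun y z h =>
    (inseparable_iff_closure_eq.2 h).eq
  have hex : ∀ A : ↥(KSets dClass X), ∃ y : Y, closure (f '' (A : Set X)) = closure {y} :=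
    fun A => (A.2.2 Y tY hY f hf).exists
  choose y hy using hex
  have hmono : ∀ A B : ↥(KSets dClass X), A ≤ B → specLE (y A) (y B) := by
    intro A B hAB
    have : closure (f '' (A : Set X)) ⊆ closure (f '' (B : Set X)) :=
      closure_mono (Set.image_mono hAB)
    unfold specLE
    rw [← hy B]
    apply this
    rw [hy A]
    exact subset_closure rfl
  obtain ⟨s, hs⟩ := hsup (y '' D) (hne.image y) (by
      rintro _ ⟨A, hA, rfl⟩ _ ⟨B, hB, rfl⟩
      obtain ⟨C, hC, hAC, hBC⟩ := hd A hA B hB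
      exact ⟨y C, ⟨C, hC, rfl⟩, hmono _ _ hAC, hmono _ _ hBC⟩)
  have hdir : DirectedOn specLE (y '' D) := by
      rintro _ ⟨A, hA, rfl⟩ _ ⟨B, hB, rfl⟩
      obtain ⟨C, hC, hAC, hBC⟩ := hd A hA B hB
      exact ⟨y C, ⟨C, hC, rfl⟩, hmono _ _ hAC, hmono _ _ hBC⟩
  refine ⟨s, ?_, ?_⟩
  · apply Set.Subset.antisymm
    · refine closure_minimal ?_ isClosed_closure
      rw [Set.image_subset_iff]
      refine closure_minimal ?_ (isClosed_closure.preimage hf)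
      refine Set.iUnion₂_subset fun A hA => ?_
      intro a ha
      have h1 : f a ∈ closure {y A} := by
        rw [← hy A]; exact subset_closure ⟨a, ha, rfl⟩
      exact closure_minimal (Set.singleton_subset_iff.2 (hs.1 _ ⟨A, hA, rfl⟩)) isClosed_closure h1
    · refine closure_minimal (Set.singleton_subset_iff.2 ?_) isClosed_closure
      by_contra hc
      obtain ⟨_, ⟨A, hA, rfl⟩, hA2⟩ := (hopen _ (isClosed_closure
        (s := f '' closure (⋃ A ∈ D, (A : Set X)))).isOpen_compl).2 _ (hne.image y) hdir s hs hc
      apply hA2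
      have h1 : y A ∈ closure (f '' (A : Set X)) := by
        rw [hy A]; exact subset_closure rfl
      refine closure_mono (Set.image_mono ?_) h1
      exact (Set.subset_biUnion_of_mem (u := fun A : ↥(KSets dClass X) => (A : Set X)) hA).trans
        subset_closure
  · intro z hz
    apply huniq
    rw [← hz]
    apply Set.Subset.antisymm
    · refine closure_minimal ?_ isClosed_closure
      rw [Set.image_subset_iff]
      refine closure_minimal ?_ (isClosed_closure.preimage hf)
      refine Set.iUnion₂_subset fun A hA => ?_
      intro a ha
      have h1 : f a ∈ closure {y A} := by
        rw [← hy A]; exact subset_closure ⟨a, ha, rfl⟩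
      exact closure_minimal (Set.singleton_subset_iff.2 (hs.1 _ ⟨A, hA, rfl⟩)) isClosed_closure h1
    · refine closure_minimal (Set.singleton_subset_iff.2 ?_) isClosed_closure
      by_contra hc
      obtain ⟨_, ⟨A, hA, rfl⟩, hA2⟩ := (hopen _ (isClosed_closure
        (s := f '' closure (⋃ A ∈ D, (A : Set X)))).isOpen_compl).2 _ (hne.image y) hdir s hs hc
      apply hA2
      have h1 : y A ∈ closure (f '' (A : Set X)) := by
        rw [hy A]; exact subset_closure rfl
      refine closure_mono (Set.image_mono ?_) h1
      exact (Set.subset_biUnion_of_mem (u := fun A : ↥(KSets dClass X) => (A : Set X)) hA).trans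
        subset_closure

theorem aux_lub (X : Type u) [tX : TopologicalSpace X] (D : Set ↥(KSets dClass X))
    (hne : D.Nonempty) (hd : DirectedOn (· ≤ ·) D) :
    IsLUB D ⟨closure (⋃ A ∈ D, (A : Set X)), aux_union X D hne hd⟩ := by
  constructor
  · intro A hA
    exact (Set.subset_biUnion_of_mem (u := fun A : ↥(KSets dClass X) => (A : Set X)) hA).trans
        subset_closure
  · intro B hB
    exact closure_minimal (Set.iUnion₂_subset fun A hA => hB hA) B.2.1

theorem aux_eta_mem (P : Type u) [PartialOrder P] (x : P) :
    {p : P | p ≤ x} ∈ @KSets dClass P (scottTop P) := by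
  letI := scottTop P
  refine ⟨aux_isClosed_Iic x, fun Y tY hY f hf => ?_⟩
  haveI : T0Space Y := hY.1
  have h : closure (f '' {p : P | p ≤ x}) = closure {f x} := by
    rw [← aux_closure x, closure_image_closure hf, Set.image_singleton]
  refine ⟨f x, h, fun z hz => ?_⟩
  exact (inseparable_iff_closure_eq.2 (hz.symm.trans h)).eq

theorem aux_eta_lub (P : Type u) [PartialOrder P] (η : P → ↥(@KSets dClass P (scottTop P)))
    (hη : ∀ x : P, (η x : Set P) = {p : P | p ≤ x}) : ScottContinuous η := by
  intro D hne hd a ha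
  constructor
  · rintro _ ⟨d, hdD, rfl⟩
    show (η d : Set P) ⊆ η a
    rw [hη, hη]
    exact fun p hp => le_trans hp (ha.1 hdD)
  · intro B hB
    show (η a : Set P) ⊆ B
    have hc := (aux_isClosed_iff (B : Set P)).1 B.2.1
    have : a ∈ (B : Set P) := by
      refine hc.2 D hne hd a ha fun d hdD => ?_
      have h1 : (η d : Set P) ⊆ B := hB ⟨d, hdD, rfl⟩
      rw [hη] at h1
      exact h1 (le_refl d)
    rw [hη]
    exact fun p hp => hc.1 hp this

/-- Any subset of `𝐝(Σ P)` closed under directed suprema and containing the image of `η`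
is everything. -/
theorem aux_dense (P : Type u) [PartialOrder P] (η : P → ↥(@KSets dClass P (scottTop P)))
    (hη : ∀ x : P, (η x : Set P) = {p : P | p ≤ x})
    (E : Set ↥(@KSets dClass P (scottTop P))) (hE : ∀ x, η x ∈ E)
    (hsup : ∀ D ⊆ E, D.Nonempty → DirectedOn (· ≤ ·) D → ∀ A, IsLUB D A → A ∈ E)
    (A : ↥(@KSets dClass P (scottTop P))) : A ∈ E := by
  letI := scottTop P
  letI := scottTop ↥E
  -- directed subsets of `E` have suprema computed in `𝐝(Σ P)`
  have key : ∀ D : Set ↥E, D.Nonempty → DirectedOn (· ≤ ·) D →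
      ∃ C : ↥E, IsLUB D C ∧ ∀ B : ↥(KSets dClass P), (∀ d ∈ D, (d : ↥(KSets dClass P)) ≤ B) →
        (C : ↥(KSets dClass P)) ≤ B := by
    intro D hne hd
    have hne' : (Subtype.val '' D).Nonempty := hne.image _
    have hd' : DirectedOn (· ≤ ·) (Subtype.val '' D) := by
      rintro _ ⟨x, hx, rfl⟩ _ ⟨y, hy, rfl⟩
      obtain ⟨z, hz, hxz, hyz⟩ := hd x hx y hy
      exact ⟨z, ⟨z, hz, rfl⟩, hxz, hyz⟩
    have hl := aux_lub P _ hne' hd'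
    have hm := hsup _ (by rintro _ ⟨x, hx, rfl⟩; exact x.2) hne' hd' _ hl
    refine ⟨⟨_, hm⟩, ⟨fun d hdD => hl.1 ⟨d, hdD, rfl⟩, fun B hB => ?_⟩, fun B hB => ?_⟩
    · exact hl.2 (by rintro _ ⟨x, hx, rfl⟩; exact hB hx)
    · exact hl.2 (by rintro _ ⟨x, hx, rfl⟩; exact hB x hx)
  have hdcpo : IsDcpo ↥E := fun D hne hd => by
    obtain ⟨C, hC, _⟩ := key D hne hd
    exact ⟨C, hC⟩
  have hsc := aux_eta_lub P η hη
  have hf : ScottContinuous (fun x => (⟨η x, hE x⟩ : ↥E)) := by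
    intro D hne hd a ha
    have h := hsc hne hd ha
    constructor
    · rintro _ ⟨d, hdD, rfl⟩
      exact h.1 ⟨d, hdD, rfl⟩
    · intro B hB
      refine h.2 ?_
      rintro _ ⟨d, hdD, rfl⟩
      exact hB ⟨d, hdD, rfl⟩
  obtain ⟨B, hB, -⟩ := A.2.2 ↥E _ (aux_dSpace ↥E hdcpo) _ (aux_cont hf)
  have hAB : (A : Set P) ⊆ (B : ↥(KSets dClass P)) := by
    intro a ha
    have h1 : (⟨η a, hE a⟩ : ↥E) ∈ closure {B} := by
      rw [← hB]; exact subset_closure ⟨a, ha, rfl⟩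
    have h2 : (⟨η a, hE a⟩ : ↥E) ≤ B := (aux_specLE _ _).1 h1
    have h3 : (η a : Set P) ⊆ (B : ↥(KSets dClass P)) := h2
    rw [hη] at h3
    exact h3 (le_refl a)
  have hcl : IsClosed {C : ↥E | (C : ↥(KSets dClass P)) ≤ A} := by
    rw [aux_isClosed_iff]
    refine ⟨fun C C' h hC => le_trans (show (C' : ↥(KSets dClass P)) ≤ C from h) hC,
      fun D hne hd a ha hD => ?_⟩
    obtain ⟨C, hC, hC'⟩ := key D hne hd
    rw [ha.unique hC]
    exact hC' A hD
  have hBA : (B : ↥(KSets dClass P)) ≤ A := by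
    have h1 : B ∈ closure ((fun x => (⟨η x, hE x⟩ : ↥E)) '' (A : Set P)) := by
      rw [hB]; exact subset_closure rfl
    refine closure_minimal ?_ hcl h1
    rintro _ ⟨a, ha, rfl⟩
    show (η a : Set P) ⊆ A
    rw [hη]
    exact fun p hp => ((aux_isClosed_iff (A : Set P)).1 A.2.1).1 hp ha
  have : A = B := le_antisymm hAB hBA
  rw [this]
  exact B.2



/-- For any poset `P`, `𝐝(Σ P)` (ordered by inclusion) is a dcpo,
`η : P → 𝐝(Σ P)`, `η x = ↓x`, is Scott continuous, and every Scott continuous map from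
`P` to a dcpo factors uniquely Scott-continuously through `η`; thus `⟨𝐝(Σ P), η⟩` is a
`D_s`-completion (dcpo-completion) of `P`. -/
theorem stmt12 (P : Type u) [PartialOrder P] :
    IsDcpo ↥(@KSets dClass P (scottTop P)) ∧
    (∀ x : P, {p : P | p ≤ x} ∈ @KSets dClass P (scottTop P)) ∧
    ∀ η : P → ↥(@KSets dClass P (scottTop P)),
      (∀ x : P, (η x : Set P) = {p : P | p ≤ x}) →
      ScottContinuous η ∧
      ∀ (Q : Type u) [PartialOrder Q], IsDcpo Q →
        ∀ f : P → Q, ScottContinuous f →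
          ∃! g : ↥(@KSets dClass P (scottTop P)) → Q, ScottContinuous g ∧ g ∘ η = f := by
  letI := scottTop P
  refine ⟨fun D hne hd => ⟨_, aux_lub P D hne hd⟩, aux_eta_mem P, fun η hη => ?_⟩
  have hsc := aux_eta_lub P η hη
  refine ⟨hsc, fun Q _ hQ f hf => ?_⟩
  letI := scottTop Q
  have hfc : Continuous f := aux_cont hf
  have hex : ∀ A : ↥(KSets dClass P), ∃ y : Q, closure (f '' (A : Set P)) = closure {y} :=
    fun A => (A.2.2 Q _ (aux_dSpace Q hQ) f hfc).exists
  choose g hg using hex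
  have hle : ∀ A q, g A ≤ q ↔ (A : Set P) ⊆ f ⁻¹' {p | p ≤ q} := by
    intro A q
    constructor
    · intro h a ha
      have h1 : f a ∈ closure {g A} := by
        rw [← hg A]; exact subset_closure ⟨a, ha, rfl⟩
      exact le_trans ((aux_specLE _ _).1 h1) h
    · intro h
      have h1 : g A ∈ closure (f '' (A : Set P)) := by
        rw [hg A]; exact subset_closure rfl
      exact closure_minimal (Set.image_subset_iff.2 h) (aux_isClosed_Iic q) h1
  suffices hgood : ScottContinuous g ∧ g ∘ η = f by
    refine ⟨g, hgood, ?_⟩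
    rintro k ⟨hks, hk⟩
    funext A
    refine aux_dense P η hη {A | k A = g A} (fun x => ?_) (fun D hDE hne hd A hA => ?_) A
    · exact (congrFun hk x).trans (congrFun hgood.2 x).symm
    · have h1 := hks hne hd hA
      have h2 := hgood.1 hne hd hA
      rw [Set.image_congr (fun B hB => hDE hB)] at h1
      exact h1.unique h2
  refine ⟨?_, ?_⟩
  · intro D hne hd A hA
    have hl := aux_lub P D hne hd
    constructor
    · rintro _ ⟨B, hB, rfl⟩
      rw [hle]
      exact Set.Subset.trans (show (B : Set P) ⊆ A from hA.1 hB) ((hle A _).1 le_rfl)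
    · intro q hq
      rw [hle, hA.unique hl]
      refine closure_minimal (Set.iUnion₂_subset fun B hB => ?_)
        ((aux_isClosed_Iic q).preimage hfc)
      exact (hle B q).1 (hq ⟨B, hB, rfl⟩)
  · funext x
    apply le_antisymm
    · show g (η x) ≤ f x
      rw [hle, hη]
      exact fun p hp => hf.monotone hp
    · refine (hle (η x) (g (η x))).1 le_rfl ?_
      rw [hη]
      exact le_refl x
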